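/- Let r and m be integers with 1 ≤ r < m. Then (κ^{+(m-1)},<κ)⤳B_m(≤r) holds for every infinite cardinal κ, and (λ^{+(r-1)},<λ)⤳B_m(≤r) fails for every infinite cardinal λ; in particular, the Kuratowski index of B_m(≤r) satisfies r+1 ≤ kur(B_m(≤r)) ≤ m. -/

import Mathlib

/-!
Both halves are variants of Kuratowski's free set theorem.

*Positive half.*  Replace `F` by the monotone operator `G X = ⋃ {F S ∪ S | S ⊆ X finite}`, which does
not raise cardinalities `≥ κ` and maps finite sets to sets of size `< κ`.  By induction on `n`
(`exists_layers`), every set of size `κ⁺ⁿ` contains sets `L x`, `x ⊆ {0,…,n-1}`, of size `≥ κ`, such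
that `L z` misses `G (⋃_{y ⊆ x} L y)` whenever `z ⊈ x`: start from such a family of sets of size
`κ⁺` for `n`, shrink each `L y` to a subset of size `κ`, and for the index `y ∪ {n}` choose another
subset of the old `L y` avoiding `G` of everything of the first kind, a set of size `≤ κ`.  One
more step of the same kind, now selecting single points, gives points `f x`, `x ⊆ {0,…,n}`, with
`f z ∉ G (f '' {y ⊆ x})` for `z ⊈ x` (`exists_points`).  Restricting `f` to the truncated cube
suffices.

*Negative half.*  On a set of size `< λ⁺ᵏ` there is a map from finite sets to sets of size `< λ` for
which no `(k+1)`-element set is free (`exists_no_free`): well-order the set so that proper initial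
segments have size `< λ⁺⁽ᵏ⁻¹⁾` and use the maps given by induction on these segments.  The images of
`r + 1` atoms of the truncated cube under a map `f` as in the relation would be a free set of
cardinality `r + 1`.
-/

universe u v w

open Cardinal

/-- The relation `(κ,<λ)⤳P`: for every map `F` from the powerset of (a set of size) `κ`
to the subsets of size `< λ`, there is an injective `f : P → κ` such that
`F(f''(P↓x)) ∩ f''(P↓y) ⊆ f''(P↓x)` whenever `x ≤ y` in `P`. -/
def Leadsto (κ lam : Cardinal.{u}) (P : Type v) [PartialOrder P] : Prop :=
  ∀ A : Type u, #A = κ →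
    ∀ F : Set A → Set A, (∀ X : Set A, #↥(F X) < lam) →
      ∃ f : P → A, Function.Injective f ∧
        ∀ x y : P, x ≤ y →
          F (f '' Set.Iic x) ∩ f '' Set.Iic y ⊆ f '' Set.Iic x

/-- The `n`-th cardinal successor `κ⁺ⁿ`. -/
noncomputable def succN (κ : Cardinal.{u}) (n : ℕ) : Cardinal.{u} := Order.succ^[n] κ

/-- The truncated cube `B_m(≤r)`: all subsets `X` of `{0,…,m-1}` with `|X| ≤ r` or
`X = {0,…,m-1}`, ordered by inclusion. -/
abbrev TruncCube (m r : ℕ) : Type := {X : Finset (Fin m) // X.card ≤ r ∨ X = Finset.univ}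

/-- A finite union of sets of size `< c`, for `c` infinite, has size `< c`. -/
theorem mk_biUnion_finite_lt {A : Type u} {ι : Type v} {c : Cardinal.{u}} (hc : ℵ₀ ≤ c)
    {s : Set ι} (hs : s.Finite) (f : ι → Set A) (h : ∀ i ∈ s, #(f i) < c) :
    #(⋃ i ∈ s, f i : Set A) < c := by
  induction s, hs using Set.Finite.induction_on with
  | empty => simpa using (aleph0_pos.trans_le hc)
  | @insert a s _ _ ih =>
    rw [Set.biUnion_insert]
    exact (mk_union_le _ _).trans_lt (add_lt_of_lt hc (h a (Set.mem_insert _ _))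
      (ih fun i hi => h i (Set.mem_insert_of_mem _ hi)))

theorem le_succN (κ : Cardinal.{u}) (n : ℕ) : κ ≤ succN κ n := by
  induction n with
  | zero => exact le_rfl
  | succ n ih =>
    rw [succN, Function.iterate_succ_apply']
    exact ih.trans (Order.le_succ _)

/-- The part of `s` outside a set of size `< c` has size `≥ c` if `s` does. -/
theorem le_mk_diff {A : Type u} {c : Cardinal.{u}} (hc : ℵ₀ ≤ c) {s t : Set A} (hs : c ≤ #s)
    (ht : #t < c) : c ≤ #(s \ t : Set A) := by
  by_contra! h
  have h1 : #s ≤ #(s \ t : Set A) + #t :=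
    (mk_le_mk_of_subset (by rw [Set.sdiff_union_self]; exact Set.subset_union_left)).trans
      (mk_union_le _ _)
  exact absurd (hs.trans h1) (not_le.2 (add_lt_of_lt hc h ht))

/-! ### The positive relation -/

/-- The monotone operator generated by the values of `F` on finite sets. -/
def finHull {A : Type u} (F : Set A → Set A) (X : Set A) : Set A :=
  ⋃ S ∈ {S : Finset A | (S : Set A) ⊆ X}, (F S ∪ S)

theorem finHull_mono {A : Type u} (F : Set A → Set A) : Monotone (finHull F) :=
  fun _ _ h => Set.biUnion_subset_biUnion_left fun _ hS => hS.trans h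

theorem finHull_finite {A : Type u} {F : Set A → Set A} {κ : Cardinal.{u}} (hκ : ℵ₀ ≤ κ)
    (hF : ∀ X, #(F X) < κ) {X : Set A} (hX : X.Finite) : #(finHull F X) < κ := by
  refine mk_biUnion_finite_lt hκ ?_ _ fun S _ => ?_
  · have := hX.finite_subsets.preimage (f := fun S : Finset A => (S : Set A))
      Finset.coe_injective.injOn
    exact this
  · refine (mk_union_le _ _).trans_lt (add_lt_of_lt hκ (hF _) ?_)
    exact (lt_aleph0_of_finite _).trans_le hκ

theorem finHull_le {A : Type u} {F : Set A → Set A} {κ : Cardinal.{u}} (hκ : ℵ₀ ≤ κ)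
    (hF : ∀ X, #(F X) < κ) {c : Cardinal.{u}} (hc : κ ≤ c) {X : Set A} (hX : #X ≤ c) :
    #(finHull F X) ≤ c := by
  have hc0 : ℵ₀ ≤ c := hκ.trans hc
  -- index the union by `Finset X`, which has size at most `c`
  have h1 : finHull F X ⊆ ⋃ T : Finset X,
      (F (T.map (Function.Embedding.subtype _) : Finset A) ∪
        (T.map (Function.Embedding.subtype _) : Finset A)) := by
    classical
    intro a ha
    simp only [finHull, Set.mem_iUnion, Set.mem_ofPred_eq] at ha
    obtain ⟨S, hS, ha⟩ := ha
    refine Set.mem_iUnion.2 ⟨S.subtype (· ∈ X), ?_⟩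
    rw [Finset.subtype_map_of_mem (fun x hx => hS hx)]
    exact ha
  refine (mk_le_mk_of_subset h1).trans ((mk_iUnion_le _).trans ?_)
  have h2 : #(Finset X) ≤ c := by
    rcases finite_or_infinite X with h | h
    · exact (lt_aleph0_of_finite _).le.trans hc0
    · rwa [mk_finset_of_infinite]
  refine (mul_le_mul' h2 (ciSup_le' fun T => ?_)).trans (mul_eq_self hc0).le
  refine (mk_union_le _ _).trans (add_le_of_le hc0 ((hF _).le.trans hc) ?_)
  exact (lt_aleph0_of_finite _).le.trans hc0

/-- Sets `L x`, `x ⊆ {0,…,n-1}`, of size `≥ κ` inside a set of size `≥ κ⁺ⁿ`, independent with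
respect to a monotone operator which does not raise cardinalities `≥ κ`. -/
theorem exists_layers {A : Type u} (G : Set A → Set A) (hG : Monotone G) (n : ℕ) :
    ∀ κ : Cardinal.{u}, ℵ₀ ≤ κ → (∀ c, κ ≤ c → ∀ X : Set A, #X ≤ c → #(G X) ≤ c) →
      succN κ n ≤ #A →
      ∃ L : Finset ℕ → Set A,
        (∀ x ⊆ Finset.range n, κ ≤ #(L x)) ∧
        ∀ x ⊆ Finset.range n, ∀ z ⊆ Finset.range n, ¬ z ⊆ x →
          Disjoint (L z) (G (⋃ y ∈ {y | y ⊆ x}, L y)) := by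
  induction n with
  | zero =>
    intro κ _ _ hA
    refine ⟨fun _ => Set.univ, fun _ _ => by simpa [succN] using hA, fun x _ z hz hzx => ?_⟩
    exact absurd (hz.trans (by simp)) hzx
  | succ n ih =>
    intro κ hκ hc hA
    obtain ⟨L, hL, hd⟩ := ih (Order.succ κ) (hκ.trans (Order.le_succ _))
      (fun c h => hc c ((Order.le_succ _).trans h)) hA
    have h0 : ∀ y, ∃ t ⊆ L y, y ⊆ Finset.range n → #t = κ := fun y => by
      by_cases hy : y ⊆ Finset.range n
      · obtain ⟨t, ht, h⟩ := (le_mk_iff_exists_subset).1 ((Order.le_succ κ).trans (hL y hy))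
        exact ⟨t, ht, fun _ => h⟩
      · exact ⟨∅, by simp, fun h => absurd h hy⟩
    choose L₀ hL₀ hk using h0
    set E : Set A := ⋃ y ∈ {y | y ⊆ Finset.range n}, L₀ y with hE
    have hEk : #E < Order.succ κ := by
      refine mk_biUnion_finite_lt (hκ.trans (Order.le_succ _)) ?_ _ fun y hy => ?_
      · exact (Finset.finite_toSet (Finset.range n).powerset).subset
          fun y hy => Finset.mem_coe.2 (Finset.mem_powerset.2 hy)
      · rw [hk y hy]; exact Order.lt_succ _
    have hGE : #(G E) < Order.succ κ := Order.lt_succ_iff.2 (hc κ le_rfl E (Order.lt_succ_iff.1 hEk))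
    have hsub : ∀ y, (if n ∈ y then L (y.erase n) \ G E else L₀ y) ⊆ L (y.erase n) := fun y => by
      split_ifs with h
      · exact Set.sdiff_subset
      · rw [Finset.erase_eq_of_notMem h]; exact hL₀ y
    have her : ∀ x ⊆ Finset.range (n + 1), x.erase n ⊆ Finset.range n := fun x hx => by
      rw [Finset.range_add_one] at hx
      exact Finset.subset_insert_iff.1 hx
    refine ⟨fun y => if n ∈ y then L (y.erase n) \ G E else L₀ y, fun x hx => ?_,
      fun x hx z hz hzx => ?_⟩
    · dsimp only
      split_ifs with h
      · exact (Order.le_succ κ).trans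
          (le_mk_diff (hκ.trans (Order.le_succ _)) (hL _ (her x hx)) hGE)
      · rw [hk x (by simpa [Finset.erase_eq_of_notMem h] using her x hx)]
    · by_cases h : z.erase n ⊆ x.erase n
      · -- the only element of `z` outside `x` is `n`
        have hnz : n ∈ z := by
          by_contra hn
          rw [Finset.erase_eq_of_notMem hn] at h
          exact hzx (h.trans (Finset.erase_subset _ _))
        have hnx : n ∉ x := fun hn => hzx (by
          rw [← Finset.insert_erase hnz, ← Finset.insert_erase hn]
          exact Finset.insert_subset_insert _ h)
        dsimp only
        rw [if_pos hnz]
        refine (disjoint_sdiff_self_left).mono_right (hG ?_)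
        refine Set.iUnion₂_subset fun y hy => ?_
        have hny : n ∉ y := fun h => hnx (hy h)
        rw [if_neg hny]
        refine Set.subset_biUnion_of_mem (u := L₀) (x := y) ?_
        have := her x hx
        rw [Finset.erase_eq_of_notMem hnx] at this
        exact Finset.Subset.trans hy this
      · refine (hd _ (her x hx) _ (her z hz) h).mono (hsub z) (hG ?_)
        refine Set.iUnion₂_subset fun y hy => (hsub y).trans ?_
        exact Set.subset_biUnion_of_mem (u := L) (x := y.erase n) (Finset.erase_subset_erase n hy)

/-- Points `f x`, `x ⊆ {0,…,n}`, independent with respect to `finHull F`. -/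
theorem exists_points {A : Type u} {F : Set A → Set A} {κ : Cardinal.{u}} (hκ : ℵ₀ ≤ κ)
    (hF : ∀ X, #(F X) < κ) (n : ℕ) (hA : succN κ n ≤ #A) :
    ∃ f : Finset ℕ → A, ∀ x ⊆ Finset.range (n + 1), ∀ z ⊆ Finset.range (n + 1), ¬ z ⊆ x →
      f z ∉ finHull F (f '' {y | y ⊆ x}) := by
  obtain ⟨L, hL, hd⟩ := exists_layers (finHull F) (finHull_mono F) n κ hκ
    (fun c hc X hX => finHull_le hκ hF hc hX) hA
  have hfin : {y | y ⊆ Finset.range n}.Finite :=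
    (Finset.finite_toSet (Finset.range n).powerset).subset
          fun y hy => Finset.mem_coe.2 (Finset.mem_powerset.2 hy)
  have hne : Nonempty A := by
    rw [← mk_ne_zero_iff]
    exact ((aleph0_pos.trans_le hκ).trans_le ((le_succN κ n).trans hA)).ne'
  have h0 : ∀ y, ∃ a, y ⊆ Finset.range n → a ∈ L y := fun y => by
    by_cases hy : y ⊆ Finset.range n
    · have : Nonempty (L y) := by
        rw [← mk_ne_zero_iff]; exact ((aleph0_pos.trans_le hκ).trans_le (hL y hy)).ne'
      exact ⟨this.some, fun _ => this.some.2⟩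
    · exact ⟨hne.some, fun h => absurd h hy⟩
  choose f₀ hf₀ using h0
  have hE : #(finHull F (f₀ '' {y | y ⊆ Finset.range n})) < κ :=
    finHull_finite hκ hF (hfin.image _)
  have h1 : ∀ y, ∃ a, y ⊆ Finset.range n →
      a ∈ L y \ finHull F (f₀ '' {y | y ⊆ Finset.range n}) := fun y => by
    by_cases hy : y ⊆ Finset.range n
    · have : Nonempty (L y \ finHull F (f₀ '' {y | y ⊆ Finset.range n}) : Set A) := by
        rw [← mk_ne_zero_iff]
        exact ((aleph0_pos.trans_le hκ).trans_le (le_mk_diff hκ (hL y hy) hE)).ne'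
      exact ⟨this.some, fun _ => this.some.2⟩
    · exact ⟨hne.some, fun h => absurd h hy⟩
  choose f₁ hf₁ using h1
  have her : ∀ x ⊆ Finset.range (n + 1), x.erase n ⊆ Finset.range n := fun x hx => by
    rw [Finset.range_add_one] at hx
    exact Finset.subset_insert_iff.1 hx
  have hmem : ∀ y ⊆ Finset.range (n + 1),
      (if n ∈ y then f₁ (y.erase n) else f₀ y) ∈ L (y.erase n) := fun y hy => by
    split_ifs with h
    · exact (hf₁ _ (her y hy)).1
    · have := her y hy
      rw [Finset.erase_eq_of_notMem h] at this ⊢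
      exact hf₀ y this
  refine ⟨fun y => if n ∈ y then f₁ (y.erase n) else f₀ y, fun x hx z hz hzx => ?_⟩
  by_cases h : z.erase n ⊆ x.erase n
  · -- the only element of `z` outside `x` is `n`
    have hnz : n ∈ z := by
      by_contra hn
      rw [Finset.erase_eq_of_notMem hn] at h
      exact hzx (h.trans (Finset.erase_subset _ _))
    have hnx : n ∉ x := fun hn => hzx (by
      rw [← Finset.insert_erase hnz, ← Finset.insert_erase hn]
      exact Finset.insert_subset_insert _ h)
    dsimp only
    rw [if_pos hnz]
    refine fun hcon => (hf₁ _ (her z hz)).2 (finHull_mono F ?_ hcon)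
    rintro _ ⟨y, hy, rfl⟩
    have hny : n ∉ y := fun h => hnx (hy h)
    dsimp only
    rw [if_neg hny]
    refine ⟨y, ?_, rfl⟩
    have := her x hx
    rw [Finset.erase_eq_of_notMem hnx] at this
    exact Finset.Subset.trans hy this
  · refine fun hcon => Set.disjoint_left.1 (hd _ (her x hx) _ (her z hz) h) (hmem z hz)
      (finHull_mono F ?_ hcon)
    rintro _ ⟨y, hy, rfl⟩
    exact Set.mem_biUnion (x := y.erase n) (Finset.erase_subset_erase n hy)
      (hmem y (Finset.Subset.trans hy hx))

theorem leadsto_truncCube (r m : ℕ) (hrm : r < m) (κ : Cardinal.{u}) (hκ : ℵ₀ ≤ κ) :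
    Leadsto (succN κ (m - 1)) κ (TruncCube m r) := by
  intro A hA F hF
  obtain ⟨f, hf⟩ := exists_points hκ hF (m - 1) hA.ge
  rw [Nat.sub_add_cancel (by omega)] at hf
  let e : TruncCube m r → Finset ℕ := fun p => p.1.map Fin.valEmbedding
  have he : ∀ p, e p ⊆ Finset.range m := fun p a ha => by
    obtain ⟨b, _, rfl⟩ := Finset.mem_map.1 ha
    simp
  have hle : ∀ p q, e p ⊆ e q ↔ p ≤ q := fun p q => Finset.map_subset_map
  have key : ∀ p q : TruncCube m r, ¬ q ≤ p →
      f (e q) ∉ F ((f ∘ e) '' Set.Iic p) ∪ (f ∘ e) '' Set.Iic p := by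
    intro p q hqp hcon
    refine hf (e p) (he p) (e q) (he q) (fun h => hqp ((hle q p).1 h)) ?_
    have hfin : ((f ∘ e) '' Set.Iic p).Finite := Set.toFinite _
    refine Set.mem_biUnion (x := hfin.toFinset) ?_ (by simpa using hcon)
    rw [Set.mem_ofPred_eq, Set.Finite.coe_toFinset]
    rintro _ ⟨q, hq, rfl⟩
    exact ⟨e q, (hle q p).2 hq, rfl⟩
  refine ⟨f ∘ e, fun p q hpq => ?_, fun x y _ a ha => ?_⟩
  · by_contra hne
    rcases not_and_or.1 (fun h : p ≤ q ∧ q ≤ p => hne (le_antisymm h.1 h.2)) with h | h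
    · exact key q p h (Or.inr ⟨q, Set.mem_Iic.2 le_rfl, hpq.symm⟩)
    · exact key p q h (Or.inr ⟨p, Set.mem_Iic.2 le_rfl, hpq⟩)
  · obtain ⟨ha, q, _, rfl⟩ := ha
    by_contra hcon
    exact key x q (fun h => hcon ⟨q, h, rfl⟩) (Or.inl ha)

/-! ### The failure of the relation -/

open Classical in
/-- Kuratowski's set mapping without free sets of cardinality `k + 1` on a set `s` of size `< λ⁺ᵏ`.
For `k = 0` take the constant map with value `s`; in general the maximum of `H` in the well-order
of `s` selects the initial segment whose map shows that `H` is not free. -/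
theorem exists_no_free {A : Type u} {lam : Cardinal.{u}} (hl : ℵ₀ ≤ lam) (k : ℕ) :
    ∀ s : Set A, #s < succN lam k → ∃ F : Finset A → Set A, (∀ S, #(F S) < lam) ∧
      ∀ H : Finset A, (H : Set A) ⊆ s → H.card = k + 1 → ∃ a ∈ H, a ∈ F (H.erase a) := by
  induction k with
  | zero =>
    intro s hs
    refine ⟨fun _ => s, fun _ => hs, fun H hH hc => ?_⟩
    obtain ⟨a, ha⟩ := Finset.card_pos.1 (by omega : 0 < H.card)
    exact ⟨a, ha, hH ha⟩
  | succ k ih =>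
    intro s hs
    rw [succN, Function.iterate_succ_apply', Order.lt_succ_iff, ← succN] at hs
    -- an injection of `s` into the initial ordinal of `λ⁺ᵏ` well-orders `s`
    have hs' : #s ≤ #(succN lam k).ord.ToType := by rwa [mk_ord_toType]
    obtain ⟨e⟩ := hs'
    have hseg : ∀ a : s, #(Subtype.val '' {b : s | e b < e a} : Set A) < succN lam k := fun a => by
      rw [mk_image_eq Subtype.val_injective]
      have hlt : #(Set.Iio (e a)) < succN lam k := by
        simpa using mk_Iio_lt (e a) (by simp)
      refine lt_of_le_of_lt ?_ hlt
      exact mk_le_of_injective (f := fun b : {b : s | e b < e a} => (⟨e b.1, b.2⟩ : Set.Iio (e a)))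
        fun b c h => Subtype.ext (e.injective (congrArg Subtype.val h))
    choose F hF hfree using fun a : s => ih _ (hseg a)
    refine ⟨fun S => ⋃ a ∈ {a : s | a.1 ∈ S}, F a (S.erase a), fun S => ?_, fun H hH hc => ?_⟩
    · refine mk_biUnion_finite_lt hl ?_ _ fun a _ => hF _ _
      exact S.finite_toSet.preimage Subtype.val_injective.injOn
    · obtain ⟨m, hm, hmax⟩ := Finset.exists_max_image (H.subtype (· ∈ s)) e (by
        obtain ⟨a, ha⟩ := Finset.card_pos.1 (by omega : 0 < H.card)
        exact ⟨⟨a, hH ha⟩, by simpa using ha⟩)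
      rw [Finset.mem_subtype] at hm
      obtain ⟨b, hb, hbF⟩ := hfree m (H.erase m) (by
        intro b hb
        have hb' := Finset.mem_erase.1 hb
        refine ⟨⟨b, hH hb'.2⟩, lt_of_le_of_ne (hmax _ (by simpa using hb'.2)) fun h => ?_, rfl⟩
        exact hb'.1 (congrArg Subtype.val (e.injective h)))
        (by rw [Finset.card_erase_of_mem hm]; omega)
      have hb' := Finset.mem_erase.1 hb
      refine ⟨b, hb'.2, Set.mem_biUnion (x := m) ?_ ?_⟩
      · exact Finset.mem_erase.2 ⟨hb'.1.symm, hm⟩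
      · rwa [Finset.erase_right_comm]

theorem not_leadsto_truncCube (r m : ℕ) (hr : 1 ≤ r) (hrm : r < m) (lam : Cardinal.{u})
    (hl : ℵ₀ ≤ lam) : ¬ Leadsto (succN lam (r - 1)) lam (TruncCube m r) := by
  classical
  intro h
  obtain ⟨A, hA⟩ : ∃ A : Type u, #A = succN lam (r - 1) := ⟨_, mk_out _⟩
  obtain ⟨F₀, hF₀, hfree⟩ := exists_no_free (A := A) hl r Set.univ (by
    rw [mk_univ, hA]
    obtain ⟨k, rfl⟩ : ∃ k, r = k + 1 := ⟨r - 1, by omega⟩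
    rw [succN, succN, Function.iterate_succ_apply']
    exact Order.lt_succ _)
  obtain ⟨f, hf, hfF⟩ := h A hA
    (fun X => ⋃ S ∈ {S : Finset A | X.Finite ∧ (S : Set A) ⊆ X}, F₀ S) (fun X => by
      refine mk_biUnion_finite_lt hl ?_ _ fun S _ => hF₀ S
      by_cases hX : X.Finite
      · exact (hX.finite_subsets.preimage (f := fun S : Finset A => (S : Set A))
          Finset.coe_injective.injOn).subset fun S hS => hS.2
      · simp [hX])
  let atom : Fin (r + 1) → TruncCube m r :=
    fun i => ⟨{Fin.castLE hrm i}, Or.inl (by simpa using hr)⟩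
  have hatom : Function.Injective (f ∘ atom) := hf.comp fun i j hij => by
    simpa [atom] using hij
  obtain ⟨a, ha, haF⟩ := hfree (Finset.univ.image (f ∘ atom)) (Set.subset_univ _)
    (by rw [Finset.card_image_of_injective _ hatom]; simp)
  obtain ⟨i, _, rfl⟩ := Finset.mem_image.1 ha
  let x : TruncCube m r := ⟨(Finset.univ.erase i).map (Fin.castLEEmb hrm), Or.inl (by simp)⟩
  obtain ⟨p, hp, hpe⟩ := hfF x ⟨Finset.univ, Or.inr rfl⟩ (Finset.subset_univ _)
    ⟨Set.mem_biUnion (x := (Finset.univ.image (f ∘ atom)).erase ((f ∘ atom) i))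
      ⟨Set.toFinite _, fun b hb => by
        obtain ⟨hne, hb⟩ := Finset.mem_erase.1 hb
        obtain ⟨j, _, rfl⟩ := Finset.mem_image.1 hb
        have hji : j ≠ i := fun h => hne (by rw [h])
        refine ⟨atom j, ?_, rfl⟩
        change ({Fin.castLE hrm j} : Finset (Fin m)) ⊆ x.1
        simp [x, hji]⟩ haF, ⟨atom i, Finset.subset_univ _, rfl⟩⟩
  have hpi : p = atom i := hf hpe
  subst hpi
  have : ({Fin.castLE hrm i} : Finset (Fin m)) ⊆ x.1 := hp
  simp [x] at this

/-- For `1 ≤ r < m`: `(κ^{+(m-1)},<κ)⤳B_m(≤r)` holds for every infinite `κ`, and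
`(λ^{+(r-1)},<λ)⤳B_m(≤r)` fails for every infinite `λ`; hence
`r+1 ≤ kur(B_m(≤r)) ≤ m`. -/
theorem stmt13 (r m : ℕ) (hr : 1 ≤ r) (hrm : r < m) :
    (∀ κ : Cardinal.{u}, ℵ₀ ≤ κ → Leadsto (succN κ (m - 1)) κ (TruncCube m r)) ∧
    (∀ lam : Cardinal.{u}, ℵ₀ ≤ lam → ¬ Leadsto (succN lam (r - 1)) lam (TruncCube m r)) :=
  ⟨leadsto_truncCube r m hrm, not_leadsto_truncCube r m hr hrm⟩
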